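/- Let q ≥ 2 and L ≥ 2 be integers and let C ⊆ [q]^n be a code. If the matrix φ(C)/√((q−1)n) satisfies RIP-2 of order L with constant 1/2, then C is ((1−1/q)·(1−√(1.5/(L−1))), L−1)-list decodable. -/

import Mathlib

open scoped BigOperators

/-- Relative Hamming distance between two strings of length n. -/
noncomputable def relDist {n : ℕ} {A : Type*} (x y : Fin n → A) : ℝ :=
  ({i : Fin n | x i ≠ y i}.ncard : ℝ) / (n : ℝ)

/-- A code C ⊆ A^n is (ρ, L)-list decodable if every Hamming ball of relative
radius (strictly) ρ contains at most L codewords. -/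
def listDecodable {n : ℕ} {A : Type*} (C : Set (Fin n → A)) (ρ L : ℝ) : Prop :=
  ∀ y : Fin n → A, ({c | c ∈ C ∧ relDist c y < ρ}.ncard : ℝ) ≤ L

/-- Simplex encoding of a symbol x ∈ {0,…,q−1}: the vector (ω^{x·α})_{α ∈ {1,…,q−1}}
in ℂ^{q−1}, where ω = e^{2πi/q}. -/
noncomputable def simplexEnc (q : ℕ) (x : ℕ) (α : Fin (q - 1)) : ℂ :=
  Complex.exp (2 * (Real.pi : ℂ) * Complex.I * (x : ℂ) * (((α : ℕ) : ℂ) + 1) / (q : ℂ))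

/-- Coordinatewise extension of the simplex encoding to strings in [q]^n,
giving a vector in ℂ^{(q−1)n}. -/
noncomputable def simplexEncVec (q n : ℕ) (x : Fin n → Fin q) : Fin n × Fin (q - 1) → ℂ :=
  fun p => simplexEnc q (x p.1 : ℕ) p.2

/-- A complex matrix M satisfies RIP-2 of order k with constant δ if for every vector x
with at most k nonzero coordinates, (1−δ)‖x‖₂² ≤ ‖Mx‖₂² ≤ (1+δ)‖x‖₂². -/
def RIP2 {R C : Type*} [Fintype R] [Fintype C] (M : Matrix R C ℂ) (k : ℕ) (δ : ℝ) : Prop :=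
  ∀ x : C → ℂ, ({c | x c ≠ 0}.ncard ≤ k) →
    (1 - δ) * (∑ c, Complex.normSq (x c)) ≤ (∑ r, Complex.normSq (M.mulVec x r)) ∧
    (∑ r, Complex.normSq (M.mulVec x r)) ≤ (1 + δ) * (∑ c, Complex.normSq (x c))

theorem aux_enc (q x : ℕ) (α : Fin (q - 1)) :
    simplexEnc q x α =
      ((Complex.exp (2 * Real.pi * Complex.I / q)) ^ x) ^ ((α : ℕ) + 1) := by
  unfold simplexEnc
  rw [← pow_mul, ← Complex.exp_nat_mul]
  congr 1
  push_cast
  ring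

theorem aux_norm (q x : ℕ) (α : Fin (q - 1)) : Complex.normSq (simplexEnc q x α) = 1 := by
  have h : simplexEnc q x α = Complex.exp
      (((2 * Real.pi * x * ((α : ℕ) + 1) / q : ℝ) : ℂ) * Complex.I) := by
    unfold simplexEnc
    congr 1
    push_cast
    ring
  rw [Complex.normSq_eq_norm_sq, h, Complex.norm_exp_ofReal_mul_I]
  norm_num

theorem aux_conj (q x : ℕ) (α : Fin (q - 1)) :
    (starRingEnd ℂ) (simplexEnc q x α) = (simplexEnc q x α)⁻¹ := by
  rw [Complex.inv_def, aux_norm]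
  simp

theorem aux_sum (q : ℕ) (hq : 2 ≤ q) (x y : Fin q) :
    ∑ α : Fin (q - 1), (simplexEnc q x α * (starRingEnd ℂ) (simplexEnc q y α)).re
      = if x ≠ y then -1 else (q : ℝ) - 1 := by
  have hprim := Complex.isPrimitiveRoot_exp q (by omega)
  simp only [aux_conj]
  simp only [aux_enc]
  generalize Complex.exp (2 * Real.pi * Complex.I / q) = w at hprim
  have hw : w ≠ 0 := hprim.ne_zero (by omega)
  have e : ∀ α : Fin (q - 1), (w ^ (x : ℕ)) ^ ((α : ℕ) + 1) * ((w ^ (y : ℕ)) ^ ((α : ℕ) + 1))⁻¹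
      = (w ^ (x : ℕ) * (w ^ (y : ℕ))⁻¹) ^ ((α : ℕ) + 1) := by
    intro α
    rw [mul_pow, inv_pow]
  simp only [e]
  split_ifs with h
  · have hz : w ^ (x : ℕ) * (w ^ (y : ℕ))⁻¹ ≠ 1 := by
      intro h1
      apply h
      have h2 : w ^ (x : ℕ) = w ^ (y : ℕ) := by
        rwa [mul_inv_eq_one₀ (pow_ne_zero _ hw)] at h1
      exact Fin.ext (hprim.pow_inj x.2 y.2 h2)
    have hzq : (w ^ (x : ℕ) * (w ^ (y : ℕ))⁻¹) ^ q = 1 := by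
      rw [mul_pow, inv_pow, ← pow_mul, ← pow_mul, mul_comm, mul_comm _ q, mul_comm _ q,
        pow_mul, pow_mul, hprim.pow_eq_one]
      simp
    generalize w ^ (x : ℕ) * (w ^ (y : ℕ))⁻¹ = z at hz hzq
    rw [← Complex.re_sum, Fin.sum_univ_eq_sum_range (fun i => z ^ (i + 1))]
    have hg : ∑ i ∈ Finset.range q, z ^ i = 0 := by
      rw [geom_sum_eq hz, hzq]
      simp
    obtain ⟨k, rfl⟩ : ∃ k, q = k + 1 := ⟨q - 1, by omega⟩
    rw [Finset.sum_range_succ'] at hg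
    rw [Nat.add_sub_cancel, eq_neg_of_add_eq_zero_left hg]
    simp
  · push Not at h
    subst h
    rw [mul_inv_cancel₀ (pow_ne_zero _ hw)]
    simp
    rw [Nat.cast_sub (by omega)]
    simp

theorem aux_vec (q n : ℕ) (hq : 2 ≤ q) (hn : 0 < n) (x y : Fin n → Fin q) :
    ∑ p, (simplexEncVec q n x p * (starRingEnd ℂ) (simplexEncVec q n y p)).re
      = ((q : ℝ) - 1) * n - q * (relDist x y * n) := by
  classical
  have hn' : (n : ℝ) ≠ 0 := by positivity
  unfold relDist simplexEncVec
  rw [div_mul_cancel₀ _ hn', Fintype.sum_prod_type]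
  simp only [aux_sum q hq]
  have h1 : ∀ i, (if x i ≠ y i then (-1 : ℝ) else (q : ℝ) - 1)
      = ((q : ℝ) - 1) - q * (if x i ≠ y i then 1 else 0) := by
    intro i
    split_ifs <;> ring
  simp only [h1]
  rw [Finset.sum_sub_distrib, ← Finset.mul_sum, Finset.sum_boole, Set.ncard_eq_toFinset_card']
  simp
  ring

/-- If the matrix φ(C)/√((q−1)n) satisfies RIP-2 of order L with constant
1/2, then C is ((1 − 1/q)(1 − √(1.5/(L−1))), L − 1)-list decodable. -/
theorem stmt8 (q L n : ℕ) (hq : 2 ≤ q) (hL : 2 ≤ L)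
    (C : Set (Fin n → Fin q)) [Fintype C]
    (hRIP : RIP2 (fun (p : Fin n × Fin (q - 1)) (c : C) =>
        simplexEncVec q n (c : Fin n → Fin q) p /
          ((Real.sqrt (((q : ℝ) - 1) * n) : ℝ) : ℂ)) L (1 / 2)) :
    listDecodable C
      ((1 - 1 / (q : ℝ)) * (1 - Real.sqrt (1.5 / ((L : ℝ) - 1)))) ((L : ℝ) - 1) := by
  classical
  intro y
  have hL' : (2 : ℝ) ≤ L := by exact_mod_cast hL
  have hq' : (2 : ℝ) ≤ q := by exact_mod_cast hq
  rcases Nat.eq_zero_or_pos n with hn | hn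
  · subst hn
    have h1 : {c | c ∈ C ∧ relDist c y <
        (1 - 1 / (q : ℝ)) * (1 - Real.sqrt (1.5 / ((L : ℝ) - 1)))}.ncard ≤ 1 :=
      Set.ncard_le_one_of_subsingleton _
    have h2 : (({c | c ∈ C ∧ relDist c y <
        (1 - 1 / (q : ℝ)) * (1 - Real.sqrt (1.5 / ((L : ℝ) - 1)))}.ncard : ℕ) : ℝ) ≤ 1 := by
      exact_mod_cast h1
    linarith
  set t := Real.sqrt (1.5 / ((L : ℝ) - 1)) with ht
  have htsq : t ^ 2 * ((L : ℝ) - 1) = 1.5 := by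
    rw [ht, Real.sq_sqrt (div_nonneg (by norm_num) (by linarith))]
    exact div_mul_cancel₀ _ (by linarith)
  have ht0 : 0 ≤ t := Real.sqrt_nonneg _
  by_contra hcon
  push Not at hcon
  have hcard : L ≤ {c | c ∈ C ∧ relDist c y < (1 - 1 / (q : ℝ)) * (1 - t)}.ncard := by
    have : (L : ℝ) < ({c | c ∈ C ∧ relDist c y < (1 - 1 / (q : ℝ)) * (1 - t)}.ncard + 1 : ℕ) := by
      push_cast
      linarith
    have := Nat.cast_lt.mp this
    omega
  have himg : {c | c ∈ C ∧ relDist c y < (1 - 1 / (q : ℝ)) * (1 - t)}.ncard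
      = (Finset.univ.filter
          (fun c : C => relDist (c : Fin n → Fin q) y < (1 - 1 / (q : ℝ)) * (1 - t))).card := by
    rw [← Finset.card_image_of_injective _ (Subtype.val_injective), ← Set.ncard_coe_finset]
    congr 1
    ext c
    simp [and_comm]
  rw [himg] at hcard
  obtain ⟨T, hT, hTc⟩ := Finset.exists_subset_card_eq hcard
  have hdist : ∀ c ∈ T, relDist (c : Fin n → Fin q) y < (1 - 1 / (q : ℝ)) * (1 - t) := by
    intro c hc
    simpa using hT hc
  have hR := (hRIP (fun c => if c ∈ T then 1 else 0) (by
    have : {c : C | (if c ∈ T then (1 : ℂ) else 0) ≠ 0} = (T : Set C) := by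
      ext c
      simp
    rw [this, Set.ncard_coe_finset, hTc])).2
  have hn' : (0 : ℝ) < n := by exact_mod_cast hn
  set N : ℝ := ((q : ℝ) - 1) * n with hN
  have hNpos : 0 < N := mul_pos (by linarith) hn'
  set S : Fin n × Fin (q - 1) → ℂ := fun p => ∑ c ∈ T, simplexEncVec q n (c : Fin n → Fin q) p
    with hS
  have hmv : ∀ p, Complex.normSq (Matrix.mulVec
      (fun (p : Fin n × Fin (q - 1)) (c : C) =>
        simplexEncVec q n (c : Fin n → Fin q) p / ((Real.sqrt N : ℝ) : ℂ))
      (fun c => if c ∈ T then 1 else 0) p) = Complex.normSq (S p) / N := by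
    intro p
    have : Matrix.mulVec
      (fun (p : Fin n × Fin (q - 1)) (c : C) =>
        simplexEncVec q n (c : Fin n → Fin q) p / ((Real.sqrt N : ℝ) : ℂ))
      (fun c => if c ∈ T then 1 else 0) p = S p / ((Real.sqrt N : ℝ) : ℂ) := by
      simp only [Matrix.mulVec, dotProduct, hS, mul_ite, mul_one, mul_zero, Finset.sum_div]
      simp
    rw [this, Complex.normSq_div, Complex.normSq_ofReal, Real.mul_self_sqrt hNpos.le]
  simp only [hmv] at hR
  have hone : ∑ c : C, Complex.normSq (if c ∈ T then (1 : ℂ) else 0) = L := by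
    simp [apply_ite Complex.normSq, hTc]
  rw [hone, ← Finset.sum_div, div_le_iff₀ hNpos] at hR
  set Y := simplexEncVec q n y with hY
  have hYn : ∑ p, Complex.normSq (Y p) = N := by
    simp only [hY, simplexEncVec, aux_norm]
    simp [hN]
    rw [Nat.cast_sub (by omega)]
    push_cast
    ring
  have hre : ∑ p, (S p * (starRingEnd ℂ) (Y p)).re
      = ∑ c ∈ T, (N - q * (relDist (c : Fin n → Fin q) y * n)) := by
    simp only [hS, Finset.sum_mul, Complex.re_sum]
    rw [Finset.sum_comm]
    exact Finset.sum_congr rfl fun c _ => aux_vec q n hq hn c y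
  have hlow : (L : ℝ) * (N * t) ≤ ∑ p, (S p * (starRingEnd ℂ) (Y p)).re := by
    rw [hre, ← hTc, ← nsmul_eq_mul]
    apply Finset.card_nsmul_le_sum
    intro c hc
    have h1 := mul_le_mul_of_nonneg_left (hdist c hc).le (show (0 : ℝ) ≤ q * n by positivity)
    have h2 : (q : ℝ) * n * ((1 - 1 / (q : ℝ)) * (1 - t)) = N * (1 - t) := by
      rw [hN]
      field_simp
    nlinarith
  have hpos : 0 ≤ ∑ p, Complex.normSq (S p - ((L * t : ℝ) : ℂ) * Y p) :=
    Finset.sum_nonneg fun p _ => Complex.normSq_nonneg _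
  have hexp : ∑ p, Complex.normSq (S p - ((L * t : ℝ) : ℂ) * Y p)
      = ∑ p, Complex.normSq (S p) + (L * t) ^ 2 * ∑ p, Complex.normSq (Y p)
        - 2 * (L * t) * ∑ p, (S p * (starRingEnd ℂ) (Y p)).re := by
    rw [Finset.mul_sum, Finset.mul_sum, ← Finset.sum_add_distrib, ← Finset.sum_sub_distrib]
    refine Finset.sum_congr rfl fun p _ => ?_
    simp only [Complex.normSq_apply, Complex.sub_re, Complex.sub_im, Complex.mul_re,
      Complex.mul_im, Complex.ofReal_re, Complex.ofReal_im, Complex.conj_re, Complex.conj_im]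
    ring
  rw [hexp, hYn] at hpos
  have h3 := mul_le_mul_of_nonneg_left hlow (show (0 : ℝ) ≤ 2 * (L * t) by positivity)
  have h4 : 0 ≤ (L * N) * (1.5 - L * t ^ 2) := by
    norm_num at hR ⊢
    linarith
  have h5 : 0 ≤ 1.5 - L * t ^ 2 := nonneg_of_mul_nonneg_right h4 (by positivity)
  norm_num at htsq h5
  nlinarith
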